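/- Let d ≥ 1 and let μ, ν be Borel probability measures on ℝ^d with finite first moments which are equivalent to the d-dimensional Lebesgue measure (i.e. μ, ν and Lebesgue measure are mutually absolutely continuous). Then the infimum over all convex 1-Lipschitz functions f : ℝ^d → ℝ of (∫ f dν − ∫ f dμ) equals the infimum over all Borel probability measures ρ on ℝ^d with support contained in the closed unit ball of (C(ν,ρ) − C(μ,ρ)). -/

import Mathlib

open MeasureTheory Metric RealInnerProductSpace

noncomputable section

/-- The set of couplings of two measures on `ℝ^d`. -/
def Couplings {d : ℕ} (α β : Measure (EuclideanSpace ℝ (Fin d))) :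
    Set (Measure (EuclideanSpace ℝ (Fin d) × EuclideanSpace ℝ (Fin d))) :=
  {π | π.map Prod.fst = α ∧ π.map Prod.snd = β}

/-- `C(α,β) = sup_{π ∈ Π(α,β)} ∫ ⟨x,y⟩ dπ`. -/
def OTcost {d : ℕ} (α β : Measure (EuclideanSpace ℝ (Fin d))) : ℝ :=
  sSup {r : ℝ | ∃ π ∈ Couplings α β, r = ∫ p, ⟪p.1, p.2⟫ ∂π}

section Helpers

variable {d : ℕ}
theorem coupl_prob (α ρ : Measure (EuclideanSpace ℝ (Fin d))) [IsProbabilityMeasure α]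
    (π : Measure (EuclideanSpace ℝ (Fin d) × EuclideanSpace ℝ (Fin d)))
    (h : π ∈ Couplings α ρ) : IsProbabilityMeasure π := by
  refine ⟨?_⟩
  have := congrArg (fun m => m Set.univ) h.1
  simpa [Measure.map_apply measurable_fst MeasurableSet.univ] using this

theorem coupl_ball (α ρ : Measure (EuclideanSpace ℝ (Fin d)))
    (hρ : ρ (closedBall (0 : EuclideanSpace ℝ (Fin d)) 1)ᶜ = 0)
    (π : Measure (EuclideanSpace ℝ (Fin d) × EuclideanSpace ℝ (Fin d)))
    (h : π ∈ Couplings α ρ) : ∀ᵐ p ∂π, ‖p.2‖ ≤ 1 := by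
  have h1 : ∀ᵐ y ∂ρ, ‖y‖ ≤ 1 := by
    rw [ae_iff]
    convert hρ using 2
    ext y; simp
  rw [← h.2] at h1
  exact ae_of_ae_map measurable_snd.aemeasurable h1

theorem coupl_fst (α ρ : Measure (EuclideanSpace ℝ (Fin d)))
    (π : Measure (EuclideanSpace ℝ (Fin d) × EuclideanSpace ℝ (Fin d)))
    (h : π ∈ Couplings α ρ) (f : EuclideanSpace ℝ (Fin d) → ℝ) (hf : Integrable f α) :
    Integrable (fun p : EuclideanSpace ℝ (Fin d) × EuclideanSpace ℝ (Fin d) => f p.1) π ∧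
      ∫ p, f p.1 ∂π = ∫ x, f x ∂α := by
  have h1 := h.1
  subst h1
  exact ⟨(integrable_map_measure hf.1 measurable_fst.aemeasurable).1 hf,
    (integral_map measurable_fst.aemeasurable hf.1).symm⟩

theorem coupl_snd (α ρ : Measure (EuclideanSpace ℝ (Fin d)))
    (π : Measure (EuclideanSpace ℝ (Fin d) × EuclideanSpace ℝ (Fin d)))
    (h : π ∈ Couplings α ρ) (f : EuclideanSpace ℝ (Fin d) → ℝ) (hf : Integrable f ρ) :
    Integrable (fun p : EuclideanSpace ℝ (Fin d) × EuclideanSpace ℝ (Fin d) => f p.2) π ∧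
      ∫ p, f p.2 ∂π = ∫ x, f x ∂ρ := by
  have h1 := h.2
  subst h1
  exact ⟨(integrable_map_measure hf.1 measurable_snd.aemeasurable).1 hf,
    (integral_map measurable_snd.aemeasurable hf.1).symm⟩

theorem coupl_int (α ρ : Measure (EuclideanSpace ℝ (Fin d)))
    (hα : Integrable (fun x => ‖x‖) α)
    (hρ : ρ (closedBall (0 : EuclideanSpace ℝ (Fin d)) 1)ᶜ = 0)
    (π : Measure (EuclideanSpace ℝ (Fin d) × EuclideanSpace ℝ (Fin d)))
    (h : π ∈ Couplings α ρ) :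
    Integrable (fun p : EuclideanSpace ℝ (Fin d) × EuclideanSpace ℝ (Fin d) => ⟪p.1, p.2⟫) π ∧
      |∫ p, ⟪p.1, p.2⟫ ∂π| ≤ ∫ x, ‖x‖ ∂α := by
  obtain ⟨h1, h2⟩ := coupl_fst α ρ π h _ hα
  have h3 : ∀ᵐ p ∂π, ‖(⟪p.1, p.2⟫ : ℝ)‖ ≤ ‖p.1‖ := by
    filter_upwards [coupl_ball α ρ hρ π h] with p hp
    calc ‖(⟪p.1, p.2⟫ : ℝ)‖ ≤ ‖p.1‖ * ‖p.2‖ := norm_inner_le_norm _ _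
      _ ≤ ‖p.1‖ := mul_le_of_le_one_right (norm_nonneg _) hp
  refine ⟨h1.mono' (by fun_prop) h3, ?_⟩
  rw [← h2]
  exact norm_integral_le_of_norm_le h1 h3

theorem ot_bdd (α ρ : Measure (EuclideanSpace ℝ (Fin d)))
    (hα : Integrable (fun x => ‖x‖) α)
    (hρ : ρ (closedBall (0 : EuclideanSpace ℝ (Fin d)) 1)ᶜ = 0) :
    BddAbove {r : ℝ | ∃ π ∈ Couplings α ρ, r = ∫ p, ⟪p.1, p.2⟫ ∂π} := by
  refine ⟨∫ x, ‖x‖ ∂α, ?_⟩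
  rintro r ⟨π, h, rfl⟩
  exact (abs_le.1 (coupl_int α ρ hα hρ π h).2).2

theorem ot_ge (α ρ : Measure (EuclideanSpace ℝ (Fin d)))
    (hα : Integrable (fun x => ‖x‖) α)
    (hρ : ρ (closedBall (0 : EuclideanSpace ℝ (Fin d)) 1)ᶜ = 0)
    (π : Measure (EuclideanSpace ℝ (Fin d) × EuclideanSpace ℝ (Fin d)))
    (h : π ∈ Couplings α ρ) : ∫ p, ⟪p.1, p.2⟫ ∂π ≤ OTcost α ρ :=
  le_csSup (ot_bdd α ρ hα hρ) ⟨π, h, rfl⟩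

theorem prod_cpl_mem (α ρ : Measure (EuclideanSpace ℝ (Fin d)))
    [IsProbabilityMeasure α] [IsProbabilityMeasure ρ] : α.prod ρ ∈ Couplings α ρ := by
  constructor
  · simp [Measure.map_fst_prod]
  · simp [Measure.map_snd_prod]

theorem ot_le (α ρ : Measure (EuclideanSpace ℝ (Fin d)))
    [IsProbabilityMeasure α] [IsProbabilityMeasure ρ] (b : ℝ)
    (h : ∀ π ∈ Couplings α ρ, ∫ p, ⟪p.1, p.2⟫ ∂π ≤ b) : OTcost α ρ ≤ b := by
  refine csSup_le ⟨_, _, prod_cpl_mem α ρ, rfl⟩ ?_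
  rintro r ⟨π, hπ, rfl⟩
  exact h π hπ

theorem ot_abs (α ρ : Measure (EuclideanSpace ℝ (Fin d)))
    [IsProbabilityMeasure α] [IsProbabilityMeasure ρ]
    (hα : Integrable (fun x => ‖x‖) α)
    (hρ : ρ (closedBall (0 : EuclideanSpace ℝ (Fin d)) 1)ᶜ = 0) :
    |OTcost α ρ| ≤ ∫ x, ‖x‖ ∂α := by
  rw [abs_le]
  constructor
  · exact (abs_le.1 (coupl_int α ρ hα hρ _ (prod_cpl_mem α ρ)).2).1.trans
      (ot_ge α ρ hα hρ _ (prod_cpl_mem α ρ))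
  · exact ot_le α ρ _ fun π h => (abs_le.1 (coupl_int α ρ hα hρ π h).2).2

theorem lip_int (α : Measure (EuclideanSpace ℝ (Fin d))) [IsProbabilityMeasure α]
    (hα : Integrable (fun x => ‖x‖) α) (f : EuclideanSpace ℝ (Fin d) → ℝ)
    (hf : LipschitzWith 1 f) : Integrable f α ∧ |∫ x, f x ∂α - f 0| ≤ ∫ x, ‖x‖ ∂α := by
  have h1 : ∀ x, ‖f x - f 0‖ ≤ ‖x‖ := fun x => by
    have := hf.dist_le_mul x 0
    simpa [dist_eq_norm] using this
  have h2 : Integrable (fun x => f x - f 0) α :=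
    hα.mono' (hf.continuous.sub continuous_const).aestronglyMeasurable (ae_of_all _ h1)
  have h3 : Integrable f α := by
    refine (h2.add (integrable_const (f 0))).congr (ae_of_all _ fun x => ?_)
    simp
  refine ⟨h3, ?_⟩
  have := norm_integral_le_of_norm_le hα (ae_of_all _ h1)
  rw [integral_sub h3 (integrable_const _)] at this
  simpa using this

theorem subgrad (f : EuclideanSpace ℝ (Fin d) → ℝ) (hf : ConvexOn ℝ Set.univ f)
    (x z : EuclideanSpace ℝ (Fin d)) (h : DifferentiableAt ℝ f x) :
    f x + ⟪gradient f x, z - x⟫ ≤ f z := by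
  have hg : ConvexOn ℝ Set.univ (fun t : ℝ => f (AffineMap.lineMap x z t)) := by
    exact hf.comp_affineMap (AffineMap.lineMap x z : ℝ →ᵃ[ℝ] EuclideanSpace ℝ (Fin d))
  have hd : HasDerivAt (fun t : ℝ => f (AffineMap.lineMap x z t)) (⟪gradient f x, z - x⟫) 0 := by
    have h1 : HasFDerivAt f (fderiv ℝ f x) (AffineMap.lineMap x z (0:ℝ)) := by
      simpa using h.hasFDerivAt
    have h2 := h1.comp_hasDerivAt (0:ℝ) (AffineMap.hasDerivAt_lineMap (a := x) (b := z))
    have h3 : (⟪gradient f x, z - x⟫ : ℝ) = fderiv ℝ f x (z - x) := by simp [gradient]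
    rw [h3]
    exact h2
  have := hg.le_slope_of_hasDerivAt (Set.mem_univ 0) (Set.mem_univ 1) zero_lt_one hd
  simp only [slope_def_field, AffineMap.lineMap_apply_one, AffineMap.lineMap_apply_zero, sub_zero, div_one] at this
  linarith

theorem dirA (μ ν : Measure (EuclideanSpace ℝ (Fin d)))
    [IsProbabilityMeasure μ] [IsProbabilityMeasure ν]
    (hμ : Integrable (fun x => ‖x‖) μ) (hν : Integrable (fun y => ‖y‖) ν)
    (hmuleb : μ ≪ (volume : Measure (EuclideanSpace ℝ (Fin d))))
    (f : EuclideanSpace ℝ (Fin d) → ℝ) (hc : ConvexOn ℝ Set.univ f) (hl : LipschitzWith 1 f) :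
    ∃ ρ : Measure (EuclideanSpace ℝ (Fin d)),
      IsProbabilityMeasure ρ ∧ ρ (closedBall (0 : EuclideanSpace ℝ (Fin d)) 1)ᶜ = 0 ∧
        OTcost ν ρ - OTcost μ ρ ≤ ∫ x, f x ∂ν - ∫ x, f x ∂μ := by
  have hfμ := (lip_int μ hμ f hl).1
  have hfν := (lip_int ν hν f hl).1
  set G := gradient f with hG
  have hGm : Measurable G := by
    have : Measurable (fun x => (InnerProductSpace.toDual ℝ (EuclideanSpace ℝ (Fin d))).symm
      (fderiv ℝ f x)) :=
      (InnerProductSpace.toDual ℝ (EuclideanSpace ℝ (Fin d))).symm.continuous.measurable.comp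
        (measurable_fderiv ℝ f)
    exact this
  have hG1 : ∀ x, ‖G x‖ ≤ 1 := fun x => by
    simp only [hG, gradient, LinearIsometryEquiv.norm_map]
    simpa using norm_fderiv_le_of_lipschitz ℝ hl (x₀ := x)
  have hdiff : ∀ᵐ x ∂μ, DifferentiableAt ℝ f x := hmuleb.ae_le hl.ae_differentiableAt
  have hsub : ∀ᵐ x ∂μ, ∀ z, f x + ⟪G x, z - x⟫ ≤ f z := by
    filter_upwards [hdiff] with x hx z using subgrad f hc x z hx
  let ρ := μ.map G
  have hρp : IsProbabilityMeasure ρ := Measure.isProbabilityMeasure_map hGm.aemeasurable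
  have hρ : ρ (closedBall (0 : EuclideanSpace ℝ (Fin d)) 1)ᶜ = 0 := by
    rw [Measure.map_apply hGm measurableSet_closedBall.compl]
    convert measure_empty (μ := μ)
    ext x; simp [hG1]
  let q := TopologicalSpace.denseSeq (EuclideanSpace ℝ (Fin d))
  have hq := TopologicalSpace.denseRange_denseSeq (EuclideanSpace ℝ (Fin d))
  let g : EuclideanSpace ℝ (Fin d) → ℝ := fun p => ⨆ n, (⟪q n, p⟫ - f (q n))
  have hgm : Measurable g := Measurable.iSup fun n => by fun_prop
  have hext : ∀ (p : EuclideanSpace ℝ (Fin d)) (c : ℝ), (∀ n, ⟪q n, p⟫ ≤ f (q n) + c) →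
      ∀ x, ⟪x, p⟫ ≤ f x + c := by
    intro p c h x
    have hcl : IsClosed {x | (⟪x, p⟫ : ℝ) ≤ f x + c} :=
      isClosed_le (by fun_prop) (hl.continuous.add continuous_const)
    refine hq.induction_on (p := fun x => (⟪x, p⟫ : ℝ) ≤ f x + c) x hcl h
  have hgG : ∀ᵐ x ∂μ, g (G x) = ⟪x, G x⟫ - f x := by
    filter_upwards [hsub] with x hx
    have hub : ∀ n, ⟪q n, G x⟫ - f (q n) ≤ ⟪x, G x⟫ - f x := fun n => by
      have := hx (q n)
      rw [inner_sub_right, real_inner_comm, real_inner_comm x] at this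
      linarith
    apply le_antisymm
    · exact ciSup_le hub
    · have := hext (G x) (g (G x)) (fun n => by
        have := le_ciSup (f := fun n => ⟪q n, G x⟫ - f (q n)) ⟨_, Set.forall_mem_range.2 hub⟩ n
        simp only [g]
        linarith) x
      linarith
  have hin : Integrable (fun x => (⟪x, G x⟫ : ℝ)) μ := by
    refine hμ.mono' (by fun_prop) (ae_of_all _ fun x => ?_)
    calc ‖(⟪x, G x⟫ : ℝ)‖ ≤ ‖x‖ * ‖G x‖ := norm_inner_le_norm _ _
      _ ≤ ‖x‖ := mul_le_of_le_one_right (norm_nonneg _) (hG1 x)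
  have hgi : Integrable g ρ := by
    rw [integrable_map_measure hgm.aestronglyMeasurable hGm.aemeasurable]
    exact (hin.sub hfμ).congr (hgG.mono fun x hx => by simp [hx])
  have hgint : ∫ p, g p ∂ρ = ∫ x, ⟪x, G x⟫ ∂μ - ∫ x, f x ∂μ := by
    rw [integral_map hGm.aemeasurable hgm.aestronglyMeasurable, integral_congr_ae hgG,
      integral_sub hin hfμ]
  have hFY : ∀ᵐ p ∂ρ, ∀ x, ⟪x, p⟫ ≤ f x + g p := by
    have : ∀ᵐ p ∂ρ, ∀ n, ⟪q n, p⟫ ≤ f (q n) + g p := by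
      rw [ae_all_iff]
      intro n
      rw [ae_map_iff hGm.aemeasurable (measurableSet_le (by fun_prop) (by fun_prop))]
      filter_upwards [hsub, hgG] with x hx h2
      have := hx (q n)
      rw [inner_sub_right, real_inner_comm, real_inner_comm x] at this
      rw [h2]
      linarith
    filter_upwards [this] with p hp using hext p _ hp
  refine ⟨ρ, hρp, hρ, ?_⟩
  have h1 : ∫ x, ⟪x, G x⟫ ∂μ ≤ OTcost μ ρ := by
    have hm : Measurable (fun x => (x, G x)) := measurable_id.prodMk hGm
    have := ot_ge μ ρ hμ hρ (μ.map fun x => (x, G x)) (by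
      constructor
      · rw [Measure.map_map measurable_fst hm]
        exact Measure.map_id
      · rw [Measure.map_map measurable_snd hm]
        rfl)
    rwa [integral_map hm.aemeasurable (by fun_prop)] at this
  have h2 : OTcost ν ρ ≤ ∫ x, f x ∂ν + ∫ p, g p ∂ρ := by
    refine ot_le ν ρ _ fun π hπ => ?_
    obtain ⟨a1, a2⟩ := coupl_fst ν ρ π hπ f hfν
    obtain ⟨b1, b2⟩ := coupl_snd ν ρ π hπ g hgi
    rw [← a2, ← b2, ← integral_add a1 b1]
    refine integral_mono_ae (coupl_int ν ρ hν hρ π hπ).1 (a1.add b1) ?_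
    have : ∀ᵐ p ∂π, ∀ x, ⟪x, p.2⟫ ≤ f x + g p.2 := by
      rw [← hπ.2] at hFY
      exact ae_of_ae_map measurable_snd.aemeasurable hFY
    filter_upwards [this] with p hp using hp p.1
  linarith

def mx {ι : Type} (y : ι → EuclideanSpace ℝ (Fin d)) (ψ : ι → ℝ)
    (x : EuclideanSpace ℝ (Fin d)) : ℝ := ⨆ i, (⟪x, y i⟫ - ψ i)

theorem mx_ge {ι : Type} [Fintype ι] (y : ι → EuclideanSpace ℝ (Fin d)) (ψ : ι → ℝ)
    (x : EuclideanSpace ℝ (Fin d)) (i : ι) : ⟪x, y i⟫ - ψ i ≤ mx y ψ x :=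
  le_ciSup (f := fun i => (⟪x, y i⟫ - ψ i : ℝ)) (Set.finite_range _).bddAbove i

theorem mx_le {ι : Type} [Nonempty ι] (y : ι → EuclideanSpace ℝ (Fin d)) (ψ : ι → ℝ)
    (x : EuclideanSpace ℝ (Fin d)) (c : ℝ) (h : ∀ i, ⟪x, y i⟫ - ψ i ≤ c) : mx y ψ x ≤ c :=
  ciSup_le h

theorem mx_ex {ι : Type} [Fintype ι] [Nonempty ι] (y : ι → EuclideanSpace ℝ (Fin d)) (ψ : ι → ℝ)
    (x : EuclideanSpace ℝ (Fin d)) : ∃ i, mx y ψ x = ⟪x, y i⟫ - ψ i := by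
  obtain ⟨i, hi⟩ := exists_eq_ciSup_of_finite (f := fun i => (⟪x, y i⟫ - ψ i : ℝ))
  exact ⟨i, hi.symm⟩

theorem mx_convex {ι : Type} [Fintype ι] [Nonempty ι] (y : ι → EuclideanSpace ℝ (Fin d))
    (ψ : ι → ℝ) : ConvexOn ℝ Set.univ (mx y ψ) := by
  refine ⟨convex_univ, fun x _ z _ s t hs ht hst => mx_le _ _ _ _ fun i => ?_⟩
  rw [inner_add_left, real_inner_smul_left, real_inner_smul_left, smul_eq_mul, smul_eq_mul]
  have h1 := mul_le_mul_of_nonneg_left (mx_ge y ψ x i) hs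
  have h2 := mul_le_mul_of_nonneg_left (mx_ge y ψ z i) ht
  have h3 : ψ i = s * ψ i + t * ψ i := by rw [← add_mul, hst, one_mul]
  linarith

theorem mx_lip {ι : Type} [Fintype ι] [Nonempty ι] (y : ι → EuclideanSpace ℝ (Fin d))
    (hy : ∀ i, ‖y i‖ ≤ 1) (ψ : ι → ℝ) : LipschitzWith 1 (mx y ψ) := by
  refine LipschitzWith.of_le_add fun x z => mx_le _ _ _ _ fun i => ?_
  have h1 := mx_ge y ψ z i
  have h2 : (⟪x - z, y i⟫ : ℝ) ≤ dist x z := by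
    rw [dist_eq_norm]
    exact (real_inner_le_norm _ _).trans (mul_le_of_le_one_right (norm_nonneg _) (hy i))
  rw [inner_sub_left] at h2
  linarith

theorem cells {ι : Type} [Fintype ι] [Nonempty ι] (ν : Measure (EuclideanSpace ℝ (Fin d)))
    [IsProbabilityMeasure ν] (hν : Integrable (fun y => ‖y‖) ν)
    (y : ι → EuclideanSpace ℝ (Fin d)) (hy : ∀ i, ‖y i‖ ≤ 1)
    (a : ι → ℝ) (ha : ∀ i, 0 < a i) (hsum : ∑ i, a i = 1) :
    ∃ ψ : ι → ℝ, ∀ j, a j ≤ ν.real {x | mx y ψ x ≤ ⟪x, y j⟫ - ψ j} := by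
  classical
  have hint : ∀ ψ, Integrable (mx y ψ) ν := fun ψ => (lip_int ν hν _ (mx_lip y hy ψ)).1
  set M := ∫ x, ‖x‖ ∂ν with hM
  have hM0 : 0 ≤ M := integral_nonneg fun x => norm_nonneg x
  let F : (ι → ℝ) → ℝ := fun ψ => ∫ x, mx y ψ x ∂ν + ∑ i, a i * ψ i
  have hFc : Continuous F := by
    refine Continuous.add ?_ (by fun_prop)
    refine (LipschitzWith.of_le_add (f := fun ψ => ∫ x, mx y ψ x ∂ν) fun ψ φ => ?_).continuous
    have : ∫ x, (mx y φ x + dist ψ φ) ∂ν = ∫ x, mx y φ x ∂ν + dist ψ φ := by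
      rw [integral_add (hint φ) (integrable_const _)]
      simp
    rw [← this]
    refine integral_mono (hint ψ) ((hint φ).add (integrable_const _)) fun x =>
      mx_le _ _ _ _ fun i => ?_
    have h1 := mx_ge y φ x i
    have h2 := dist_le_pi_dist ψ φ i
    rw [Real.dist_eq] at h2
    have h3 := neg_abs_le (ψ i - φ i)
    linarith
  have hshift : ∀ ψ (c : ℝ), F (fun i => ψ i - c) = F ψ := by
    intro ψ c
    have h1 : ∀ x, mx y (fun i => ψ i - c) x = mx y ψ x + c := by
      intro x
      apply le_antisymm
      · refine mx_le _ _ _ _ fun i => ?_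
        have := mx_ge y ψ x i
        linarith
      · rw [← le_sub_iff_add_le]
        refine mx_le _ _ _ _ fun i => ?_
        have := mx_ge y (fun i => ψ i - c) x i
        linarith
    simp only [F, h1, mul_sub, Finset.sum_sub_distrib, ← Finset.sum_mul, hsum]
    rw [integral_add (hint ψ) (integrable_const _)]
    simp
  have hin : ∀ x i, |(⟪x, y i⟫ : ℝ)| ≤ ‖x‖ := fun x i =>
    (abs_real_inner_le_norm _ _).trans (mul_le_of_le_one_right (norm_nonneg _) (hy i))
  have hF0 : F 0 ≤ M := by
    simp only [F, Pi.zero_apply, mul_zero, Finset.sum_const_zero, add_zero]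
    refine integral_mono (hint 0) hν fun x => mx_le _ _ _ _ fun i => ?_
    have := (abs_le.1 (hin x i)).2
    simpa using this
  let R := ∑ i, 2 * M / a i
  have hR : ∀ i, 2 * M ≤ a i * R := fun i => by
    have h1 : 2 * M / a i ≤ R := Finset.single_le_sum (f := fun i => 2 * M / a i)
      (fun j _ => div_nonneg (by linarith) (ha j).le) (Finset.mem_univ i)
    rwa [div_le_iff₀' (ha i)] at h1
  have hR0 : 0 ≤ R := Finset.sum_nonneg fun j _ => div_nonneg (by linarith) (ha j).le
  obtain ⟨ψ, hψ, hmin⟩ := (isCompact_Icc (a := (0 : ι → ℝ)) (b := fun _ => R)).exists_isMinOn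
    ⟨0, le_rfl, fun _ => hR0⟩ hFc.continuousOn
  have hglob : ∀ φ, F ψ ≤ F φ := by
    intro φ
    obtain ⟨i0, hi0⟩ := Finite.exists_min φ
    rw [← hshift φ (φ i0)]
    by_cases hb : ∀ j, φ j - φ i0 ≤ R
    · exact hmin ⟨fun j => by simpa using hi0 j, hb⟩
    · push Not at hb
      obtain ⟨j, hj⟩ := hb
      have h0 : F ψ ≤ F 0 := hmin ⟨le_rfl, fun _ => hR0⟩
      have h1 : -M ≤ ∫ x, mx y (fun i => φ i - φ i0) x ∂ν := by
        rw [hM, ← integral_neg]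
        refine integral_mono hν.neg (hint _) fun x => ?_
        have h2 := mx_ge y (fun i => φ i - φ i0) x i0
        have h3 := (abs_le.1 (hin x i0)).1
        simp only at h2 ⊢
        linarith
      have h2 : a j * (φ j - φ i0) ≤ ∑ i, a i * (φ i - φ i0) :=
        Finset.single_le_sum (f := fun i => a i * (φ i - φ i0))
          (fun i _ => mul_nonneg (ha i).le (sub_nonneg.2 (hi0 i))) (Finset.mem_univ j)
      have h3 := hR j
      have h4 := mul_le_mul_of_nonneg_left hj.le (ha j).le
      simp only [F] at h0 hF0 ⊢
      linarith
  refine ⟨ψ, fun j => ?_⟩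
  have hmxm : Measurable (mx y ψ) := (mx_lip y hy ψ).continuous.measurable
  have hS : ∀ t : ℝ, MeasurableSet {x | mx y ψ x < ⟪x, y j⟫ - ψ j + t} := fun t =>
    measurableSet_lt hmxm (by fun_prop)
  have key : ∀ t : ℝ, 0 < t → a j ≤ ν.real {x | mx y ψ x < ⟪x, y j⟫ - ψ j + t} := by
    intro t ht
    set S := {x | mx y ψ x < ⟪x, y j⟫ - ψ j + t} with hSd
    have h1 := hglob (ψ - Pi.single j t)
    have hSi : Integrable (S.indicator fun _ => t) ν := (integrable_const t).indicator (hS t)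
    have h2 : ∫ x, mx y (ψ - Pi.single j t) x ∂ν ≤ ∫ x, mx y ψ x ∂ν + ν.real S * t := by
      have : ∫ x, (mx y ψ x + S.indicator (fun _ => t) x) ∂ν
          = ∫ x, mx y ψ x ∂ν + ν.real S * t := by
        rw [integral_add (hint ψ) hSi, integral_indicator (hS t), setIntegral_const, smul_eq_mul]
      rw [← this]
      refine integral_mono (hint _) ((hint ψ).add hSi) fun x => mx_le _ _ _ _ fun i => ?_
      have h3 := mx_ge y ψ x i
      have h5 : 0 ≤ S.indicator (fun _ => t) x := Set.indicator_nonneg (fun _ _ => ht.le) x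
      by_cases hij : i = j
      · subst hij
        simp only [Pi.sub_apply, Pi.single_eq_same]
        by_cases hx : x ∈ S
        · rw [Set.indicator_of_mem hx]
          linarith
        · have hx' : ¬ (mx y ψ x < ⟪x, y i⟫ - ψ i + t) := hx
          linarith
      · simp only [Pi.sub_apply, Pi.single_eq_of_ne hij]
        linarith
    have h3 : ∑ i, a i * (ψ - Pi.single j t : ι → ℝ) i = ∑ i, a i * ψ i - a j * t := by
      simp only [Pi.sub_apply, mul_sub, Finset.sum_sub_distrib]
      congr 1
      rw [Finset.sum_eq_single j]
      · simp
      · intro b _ hb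
        simp [hb]
      · simp
    simp only [F] at h1
    rw [h3] at h1
    have h4 : a j * t ≤ ν.real S * t := by linarith
    exact le_of_mul_le_mul_right h4 ht
  have hlim : Filter.Tendsto (fun n : ℕ => ν.real {x | mx y ψ x < ⟪x, y j⟫ - ψ j + 1 / ((n:ℝ) + 1)})
      Filter.atTop (nhds (ν.real {x | mx y ψ x ≤ ⟪x, y j⟫ - ψ j})) := by
    have h1 : {x | mx y ψ x ≤ ⟪x, y j⟫ - ψ j} =
        ⋂ n : ℕ, {x | mx y ψ x < ⟪x, y j⟫ - ψ j + 1 / ((n:ℝ) + 1)} := by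
      ext x
      simp only [Set.mem_ofPred_eq, Set.mem_iInter]
      constructor
      · intro h n
        have : (0:ℝ) < 1 / ((n:ℝ) + 1) := by positivity
        linarith
      · intro h
        refine le_of_forall_pos_lt_add fun e he => ?_
        obtain ⟨n, hn⟩ := exists_nat_one_div_lt he
        linarith [h n]
    rw [h1]
    refine (ENNReal.tendsto_toReal (measure_ne_top _ _)).comp
      (tendsto_measure_iInter_atTop (fun n => (hS _).nullMeasurableSet) ?_ ⟨0, measure_ne_top _ _⟩)
    intro m n hmn x hx
    have : (1:ℝ) / ((n:ℝ) + 1) ≤ 1 / ((m:ℝ) + 1) := by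
      have : (m:ℝ) ≤ n := by exact_mod_cast hmn
      gcongr
    simp only [Set.mem_ofPred_eq] at hx ⊢
    linarith
  exact ge_of_tendsto' hlim fun n => key _ (by positivity)

theorem hyper_null (y z : EuclideanSpace ℝ (Fin d)) (h : y ≠ z) (b c : ℝ) :
    (volume : Measure (EuclideanSpace ℝ (Fin d))) {x | (⟪x, y⟫ - b : ℝ) = ⟪x, z⟫ - c} = 0 := by
  have hne : y - z ≠ 0 := sub_ne_zero.2 h
  let L : EuclideanSpace ℝ (Fin d) →ᵃ[ℝ] ℝ := ((innerSL ℝ (y - z)).toLinearMap).toAffineMap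
  have hL : ∀ x, L x = ⟪y - z, x⟫ := fun x => rfl
  let s : AffineSubspace ℝ (EuclideanSpace ℝ (Fin d)) :=
    (AffineSubspace.mk' (b - c) ⊥).comap L
  have hs : ∀ x, x ∈ s ↔ (⟪y - z, x⟫ : ℝ) = b - c := fun x => by
    simp [s, AffineSubspace.mem_comap, hL, AffineSubspace.mem_mk', sub_eq_zero]
  have htop : s ≠ ⊤ := by
    intro htop
    have h0 := (hs 0).1 (htop ▸ AffineSubspace.mem_top ℝ _ _)
    have h1 := (hs (y - z)).1 (htop ▸ AffineSubspace.mem_top ℝ _ _)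
    rw [inner_zero_right] at h0
    rw [← h0] at h1
    exact hne (inner_self_eq_zero.1 h1)
  have := Measure.addHaar_affineSubspace (volume : Measure (EuclideanSpace ℝ (Fin d))) s htop
  refine measure_mono_null (fun x hx => ?_) this
  refine (hs x).2 ?_
  have hx' : (⟪x, y⟫ - b : ℝ) = ⟪x, z⟫ - c := hx
  rw [inner_sub_left, real_inner_comm, real_inner_comm x z]
  linarith

theorem part (ρ : Measure (EuclideanSpace ℝ (Fin d))) [IsProbabilityMeasure ρ]
    (hρ : ρ (closedBall (0 : EuclideanSpace ℝ (Fin d)) 1)ᶜ = 0) (ε : ℝ) (hε : 0 < ε) :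
    ∃ (ι : Type) (_ : Fintype ι) (_ : Nonempty ι) (y : ι → EuclideanSpace ℝ (Fin d))
      (B : ι → Set (EuclideanSpace ℝ (Fin d))), Function.Injective y ∧ (∀ i, ‖y i‖ ≤ 1) ∧
      (∀ i, MeasurableSet (B i)) ∧ Pairwise (Function.onFun Disjoint B) ∧ (∀ i, ρ (B i) ≠ 0) ∧
      ρ (⋃ i, B i)ᶜ = 0 ∧ ∀ i, ∀ z ∈ B i, ‖z - y i‖ ≤ ε := by
  classical
  obtain ⟨t, hts, htf, hcov⟩ := (isCompact_closedBall
    (0 : EuclideanSpace ℝ (Fin d)) 1).finite_cover_balls hε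
  obtain ⟨n, y, hyi, hyr⟩ : ∃ (n : ℕ) (y : Fin n → EuclideanSpace ℝ (Fin d)),
      Function.Injective y ∧ Set.range y = t := by
    have := htf.fin_param
    obtain ⟨n, f, hf, hr⟩ := this
    exact ⟨n, f, hf, hr⟩
  let B : Fin n → Set (EuclideanSpace ℝ (Fin d)) := disjointed fun i => ball (y i) ε
  have hBm : ∀ i, MeasurableSet (B i) := fun i =>
    disjointedRec (fun _ _ h => h.diff measurableSet_ball) measurableSet_ball
  have hnull : ρ (⋃ i : {i // ρ (B i) ≠ 0}, B i)ᶜ = 0 := by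
    have hsub : (⋃ i : {i // ρ (B i) ≠ 0}, B i)ᶜ ⊆ (closedBall 0 1)ᶜ ∪
        ⋃ i : {i // ρ (B i) = 0}, B i := by
      intro x hx
      by_cases hxb : x ∈ closedBall (0 : EuclideanSpace ℝ (Fin d)) 1
      · right
        have h1 : x ∈ ⋃ i, B i := by
          rw [iUnion_disjointed]
          obtain ⟨c, hc, hxc⟩ := Set.mem_iUnion₂.1 (hcov hxb)
          rw [← hyr] at hc
          obtain ⟨i, rfl⟩ := hc
          exact Set.mem_iUnion.2 ⟨i, hxc⟩
        obtain ⟨i, hi⟩ := Set.mem_iUnion.1 h1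
        by_cases h0 : ρ (B i) = 0
        · exact Set.mem_iUnion.2 ⟨⟨i, h0⟩, hi⟩
        · exact absurd (Set.mem_iUnion.2 ⟨⟨i, h0⟩, hi⟩) hx
      · exact Or.inl hxb
    refine measure_mono_null hsub (measure_union_null hρ (measure_iUnion_null fun i => i.2))
  refine ⟨{i // ρ (B i) ≠ 0}, inferInstance, ?_, fun i => y i, fun i => B i,
    hyi.comp Subtype.val_injective, fun i => ?_, fun i => hBm i, ?_, fun i => i.2, hnull, ?_⟩
  · by_contra hne
    rw [not_nonempty_iff] at hne
    simp at hnull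
  · have : y i ∈ t := hyr ▸ Set.mem_range_self _
    simpa using hts this
  · intro i j hij
    exact disjoint_disjointed _ (fun h => hij (Subtype.ext h))
  · intro i z hz
    have := disjointed_subset (fun i => ball (y i) ε) i hz
    rw [mem_ball, dist_eq_norm] at this
    exact this.le

theorem coupl_comb (α ρ : Measure (EuclideanSpace ℝ (Fin d)))
    (hα : Integrable (fun x => ‖x‖) α)
    (π : Measure (EuclideanSpace ℝ (Fin d) × EuclideanSpace ℝ (Fin d)))
    (h : π ∈ Couplings α ρ) (f k : EuclideanSpace ℝ (Fin d) → ℝ) (hf : Integrable f α)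
    (hk : Integrable k ρ) (c : ℝ) :
    Integrable (fun p : EuclideanSpace ℝ (Fin d) × EuclideanSpace ℝ (Fin d) =>
      f p.1 + k p.2 + c * ‖p.1‖) π ∧
      ∫ p, (f p.1 + k p.2 + c * ‖p.1‖) ∂π
        = ∫ x, f x ∂α + ∫ x, k x ∂ρ + c * ∫ x, ‖x‖ ∂α := by
  obtain ⟨a1, a2⟩ := coupl_fst α ρ π h f hf
  obtain ⟨b1, b2⟩ := coupl_snd α ρ π h k hk
  obtain ⟨c1, c2⟩ := coupl_fst α ρ π h _ (hα.const_mul c)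
  have e1 : Integrable (fun p : EuclideanSpace ℝ (Fin d) × EuclideanSpace ℝ (Fin d) =>
      f p.1 + k p.2) π := a1.add b1
  refine ⟨e1.add c1, ?_⟩
  rw [integral_add e1 c1, integral_add a1 b1, a2, b2, c2, integral_const_mul]

theorem dirB (μ ν : Measure (EuclideanSpace ℝ (Fin d)))
    [IsProbabilityMeasure μ] [IsProbabilityMeasure ν]
    (hμ : Integrable (fun x => ‖x‖) μ) (hν : Integrable (fun y => ‖y‖) ν)
    (hnuleb : ν ≪ (volume : Measure (EuclideanSpace ℝ (Fin d))))
    (ρ : Measure (EuclideanSpace ℝ (Fin d))) [IsProbabilityMeasure ρ]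
    (hρ : ρ (closedBall (0 : EuclideanSpace ℝ (Fin d)) 1)ᶜ = 0) (ε : ℝ) (hε : 0 < ε) :
    ∃ f : EuclideanSpace ℝ (Fin d) → ℝ, ConvexOn ℝ Set.univ f ∧ LipschitzWith 1 f ∧
      ∫ x, f x ∂ν - ∫ x, f x ∂μ ≤
        OTcost ν ρ - OTcost μ ρ + ε * (∫ x, ‖x‖ ∂ν + ∫ x, ‖x‖ ∂μ) := by
  classical
  obtain ⟨ι, _, _, y, B, hyi, hy, hBm, hBd, hB0, hBc, hBy⟩ := part ρ hρ ε hε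
  have hsumB : ∑ i, ρ.real (B i) = 1 := by
    have h1 : ρ (⋃ i, B i) = 1 := by
      rw [← prob_compl_eq_zero_iff (MeasurableSet.iUnion hBm)]
      exact hBc
    have h2 : ρ.real (⋃ i, B i) = 1 := by simp [measureReal_def, h1]
    rw [← h2, measureReal_def, measure_iUnion hBd hBm, tsum_fintype,
      ENNReal.toReal_sum (fun i _ => measure_ne_top _ _)]
    rfl
  obtain ⟨ψ, hψ⟩ := cells ν hν y hy (fun i => ρ.real (B i))
    (fun i => ENNReal.toReal_pos (hB0 i) (measure_ne_top _ _)) hsumB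
  let f := mx y ψ
  have hfl : LipschitzWith 1 f := mx_lip y hy ψ
  have hfν := (lip_int ν hν f hfl).1
  have hfμ := (lip_int μ hμ f hfl).1
  let A : ι → Set (EuclideanSpace ℝ (Fin d)) := fun j => {x | mx y ψ x ≤ ⟪x, y j⟫ - ψ j}
  have hAm : ∀ i, MeasurableSet (A i) := fun i =>
    measurableSet_le hfl.continuous.measurable (by fun_prop)
  have hAd : Pairwise (Function.onFun (AEDisjoint ν) A) := by
    intro i j hij
    refine hnuleb (measure_mono_null ?_ (hyper_null (y i) (y j) (hyi.ne hij) (ψ i) (ψ j)))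
    rintro x ⟨h1, h2⟩
    have h3 := mx_ge y ψ x i
    have h4 := mx_ge y ψ x j
    simp only [A, Set.mem_ofPred_eq] at h1 h2 ⊢
    linarith
  have hAc : ⋃ i, A i = Set.univ := by
    refine Set.eq_univ_of_forall fun x => ?_
    obtain ⟨i, hi⟩ := mx_ex y ψ x
    exact Set.mem_iUnion.2 ⟨i, hi.le⟩
  have hAsplit : ∀ s, MeasurableSet s → ν s = ∑ i, ν (s ∩ A i) := by
    intro s hs
    have := Measure.restrict_iUnion_apply_ae hAd (fun i => (hAm i).nullMeasurableSet) hs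
    rw [hAc, Measure.restrict_univ, tsum_fintype] at this
    rw [this]
    exact Finset.sum_congr rfl fun i _ => Measure.restrict_apply hs
  have hBsplit : ∀ s, MeasurableSet s → ρ s = ∑ i, ρ (s ∩ B i) := by
    intro s hs
    have := Measure.restrict_iUnion_apply (μ := ρ) hBd hBm hs
    rw [Measure.restrict_eq_self_of_ae_mem (by rw [ae_iff]; exact hBc), tsum_fintype] at this
    rw [this]
    exact Finset.sum_congr rfl fun i _ => Measure.restrict_apply hs
  have hAB : ∀ i, ν (A i) = ρ (B i) := by
    have hsumA : ∑ i, ν.real (A i) = 1 := by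
      have h1 := hAsplit Set.univ MeasurableSet.univ
      simp only [measure_univ, Set.univ_inter] at h1
      have h2 := congrArg ENNReal.toReal h1
      rw [ENNReal.toReal_sum (fun i _ => measure_ne_top _ _)] at h2
      simpa [measureReal_def] using h2.symm
    have h1 := (Finset.sum_eq_sum_iff_of_le (s := Finset.univ) (fun i _ => hψ i)).1
      (by rw [hsumB]; exact hsumA.symm)
    intro i
    have h2 := h1 i (Finset.mem_univ i)
    exact ((ENNReal.toReal_eq_toReal_iff' (measure_ne_top _ _) (measure_ne_top _ _)).1 h2).symm
  let k : EuclideanSpace ℝ (Fin d) → ℝ := fun z => ∑ i, (B i).indicator (fun _ => ψ i) z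
  have hki : Integrable k ρ :=
    integrable_finsetSum _ fun i _ => (integrable_const (ψ i)).indicator (hBm i)
  have hkB : ∀ i, ∀ z ∈ B i, k z = ψ i := by
    intro i z hz
    simp only [k]
    rw [Finset.sum_eq_single i]
    · exact Set.indicator_of_mem hz _
    · intro j _ hj
      exact Set.indicator_of_notMem (fun h => Set.disjoint_left.1 (hBd hj) h hz) _
    · simp
  have hip : ∀ i, ∀ z ∈ B i, ∀ x : EuclideanSpace ℝ (Fin d),
      |(⟪x, z⟫ - ⟪x, y i⟫ : ℝ)| ≤ ε * ‖x‖ := by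
    intro i z hz x
    rw [← inner_sub_right]
    refine (abs_real_inner_le_norm _ _).trans ?_
    rw [mul_comm]
    exact mul_le_mul_of_nonneg_right (hBy i z hz) (norm_nonneg _)
  refine ⟨f, mx_convex y ψ, hfl, ?_⟩
  have hup : OTcost μ ρ ≤ ∫ x, f x ∂μ + ∫ z, k z ∂ρ + ε * ∫ x, ‖x‖ ∂μ := by
    refine ot_le μ ρ _ fun π hπ => ?_
    obtain ⟨a1, a2⟩ := coupl_comb μ ρ hμ π hπ f k hfμ hki ε
    rw [← a2]
    refine integral_mono_ae (coupl_int μ ρ hμ hρ π hπ).1 a1 ?_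
    have hae : ∀ᵐ z ∂ρ, z ∈ ⋃ i, B i := by rw [ae_iff]; exact hBc
    rw [← hπ.2] at hae
    filter_upwards [ae_of_ae_map measurable_snd.aemeasurable hae] with p hp
    obtain ⟨i, hi⟩ := Set.mem_iUnion.1 hp
    have h1 := (abs_le.1 (hip i _ hi p.1)).2
    have h2 := mx_ge y ψ p.1 i
    have h3 := hkB i _ hi
    simp only [f, h3]
    linarith
  have hlo : ∫ x, f x ∂ν + ∫ z, k z ∂ρ - ε * ∫ x, ‖x‖ ∂ν ≤ OTcost ν ρ := by
    let π : Measure (EuclideanSpace ℝ (Fin d) × EuclideanSpace ℝ (Fin d)) :=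
      ∑ i, (ρ (B i))⁻¹ • (ν.restrict (A i)).prod (ρ.restrict (B i))
    have hπa : ∀ s, π s = ∑ i, (ρ (B i))⁻¹ * (ν.restrict (A i)).prod (ρ.restrict (B i)) s := by
      intro s
      simp [π, Measure.finsetSum_apply]
    have hπ : π ∈ Couplings ν ρ := by
      constructor
      · ext s hs
        rw [Measure.map_apply measurable_fst hs, hπa, hAsplit s hs]
        refine Finset.sum_congr rfl fun i _ => ?_
        rw [← Set.prod_univ, Measure.prod_prod, Measure.restrict_apply hs,
          Measure.restrict_apply_univ, mul_comm, mul_assoc,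
          ENNReal.mul_inv_cancel (hB0 i) (measure_ne_top _ _), mul_one]
      · ext s hs
        rw [Measure.map_apply measurable_snd hs, hπa, hBsplit s hs]
        refine Finset.sum_congr rfl fun i _ => ?_
        rw [← Set.univ_prod, Measure.prod_prod, Measure.restrict_apply hs,
          Measure.restrict_apply_univ, hAB i, ← mul_assoc,
          ENNReal.inv_mul_cancel (hB0 i) (measure_ne_top _ _), one_mul]
    have hae : ∀ᵐ p ∂π, ∃ i, p.1 ∈ A i ∧ p.2 ∈ B i := by
      rw [ae_iff, hπa]
      refine Finset.sum_eq_zero fun i _ => ?_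
      rw [Measure.prod_restrict, Measure.restrict_apply']
      · convert mul_zero _
        convert measure_empty (μ := ν.prod ρ)
        ext p
        simp only [Set.mem_inter_iff, Set.mem_ofPred_eq, Set.mem_prod, Set.mem_empty_iff_false,
          iff_false, not_and]
        rintro h1 h2 h3
        exact h1 ⟨i, h2, h3⟩
      · exact (hAm i).prod (hBm i)
    refine le_trans ?_ (ot_ge ν ρ hν hρ π hπ)
    obtain ⟨a1, a2⟩ := coupl_comb ν ρ hν π hπ f k hfν hki (-ε)
    rw [sub_eq_add_neg, ← neg_mul, ← a2]
    refine integral_mono_ae a1 (coupl_int ν ρ hν hρ π hπ).1 ?_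
    filter_upwards [hae] with p hp
    obtain ⟨i, hi1, hi2⟩ := hp
    have h1 := (abs_le.1 (hip i _ hi2 p.1)).1
    have h2 : mx y ψ p.1 ≤ ⟪p.1, y i⟫ - ψ i := hi1
    have h3 := hkB i _ hi2
    simp only [f, h3]
    linarith
  linarith

end Helpers

theorem stmt8 (d : ℕ) (hd : 1 ≤ d)
    (μ ν : Measure (EuclideanSpace ℝ (Fin d)))
    [IsProbabilityMeasure μ] [IsProbabilityMeasure ν]
    (hμ : Integrable (fun x => ‖x‖) μ) (hν : Integrable (fun y => ‖y‖) ν)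
    (hmuleb : μ ≪ (volume : Measure (EuclideanSpace ℝ (Fin d))))
    (hlebmu : (volume : Measure (EuclideanSpace ℝ (Fin d))) ≪ μ)
    (hnuleb : ν ≪ (volume : Measure (EuclideanSpace ℝ (Fin d))))
    (hlebnu : (volume : Measure (EuclideanSpace ℝ (Fin d))) ≪ ν) :
    sInf {r : ℝ | ∃ f : EuclideanSpace ℝ (Fin d) → ℝ,
        ConvexOn ℝ Set.univ f ∧ LipschitzWith 1 f ∧
        r = ∫ x, f x ∂ν - ∫ x, f x ∂μ}
      = sInf {r : ℝ | ∃ ρ : Measure (EuclideanSpace ℝ (Fin d)),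
        IsProbabilityMeasure ρ ∧ ρ (closedBall (0 : EuclideanSpace ℝ (Fin d)) 1)ᶜ = 0 ∧
        r = OTcost ν ρ - OTcost μ ρ} := by
  have hb1 : BddBelow {r : ℝ | ∃ f : EuclideanSpace ℝ (Fin d) → ℝ,
        ConvexOn ℝ Set.univ f ∧ LipschitzWith 1 f ∧
        r = ∫ x, f x ∂ν - ∫ x, f x ∂μ} := by
    refine ⟨-(∫ x, ‖x‖ ∂ν) - ∫ x, ‖x‖ ∂μ, ?_⟩
    rintro r ⟨f, _, hl, rfl⟩
    have h1 := (abs_le.1 (lip_int ν hν f hl).2).1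
    have h2 := (abs_le.1 (lip_int μ hμ f hl).2).2
    linarith
  have hb2 : BddBelow {r : ℝ | ∃ ρ : Measure (EuclideanSpace ℝ (Fin d)),
        IsProbabilityMeasure ρ ∧ ρ (closedBall (0 : EuclideanSpace ℝ (Fin d)) 1)ᶜ = 0 ∧
        r = OTcost ν ρ - OTcost μ ρ} := by
    refine ⟨-(∫ x, ‖x‖ ∂ν) - ∫ x, ‖x‖ ∂μ, ?_⟩
    rintro r ⟨ρ, _, hρ, rfl⟩
    have h1 := (abs_le.1 (ot_abs ν ρ hν hρ)).1
    have h2 := (abs_le.1 (ot_abs μ ρ hμ hρ)).2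
    linarith
  apply le_antisymm
  · refine le_csInf ⟨_, Measure.dirac 0, inferInstance, ?_, rfl⟩ ?_
    · rw [Measure.dirac_apply' _ measurableSet_closedBall.compl]
      simp
    · rintro r ⟨ρ, _, hρ, rfl⟩
      refine le_of_forall_pos_le_add fun e he => ?_
      set K := ∫ x, ‖x‖ ∂ν + ∫ x, ‖x‖ ∂μ with hK
      have hK0 : 0 ≤ K :=
        add_nonneg (integral_nonneg fun x => norm_nonneg x) (integral_nonneg fun x => norm_nonneg x)
      obtain ⟨f, hc, hl, hf⟩ := dirB μ ν hμ hν hnuleb ρ hρ (e / (K + 1)) (by positivity)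
      refine (csInf_le hb1 ⟨f, hc, hl, rfl⟩).trans (hf.trans ?_)
      have : e / (K + 1) * K ≤ e := by
        rw [div_mul_eq_mul_div, div_le_iff₀ (by positivity)]
        nlinarith
      rw [← hK]
      linarith
  · refine le_csInf ⟨_, fun _ => 0, convexOn_const 0 convex_univ, LipschitzWith.const' 0, rfl⟩ ?_
    rintro r ⟨f, hc, hl, rfl⟩
    obtain ⟨ρ, h1, h2, h3⟩ := dirA μ ν hμ hν hmuleb f hc hl
    exact (csInf_le hb2 ⟨ρ, h1, h2, rfl⟩).trans h3
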